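/- arXiv:math/0604550 — 3 statements merged into one kernel-verified Lean document; each statement's English description precedes it below -/
import Mathlib

section
/- Let Ω ⊂ ℝⁿ be open and let u : Ω → ℝⁿ and p : Ω → ℝ be smooth, with div u = 0 and Δu = (u·∇)u + ∇p on Ω (the steady Navier–Stokes equations). Define the Bernoulli quantity H = |u|²/2 + p and let ω be the antisymmetric part of the gradient of u, i.e. ω_{ij} = (∂_j u_i - ∂_i u_j)/2. Then ΔH - u·∇H = 2 Σ_{i,j} ω_{ij}² pointwise on Ω; equivalently, -ΔH + u·∇H = -2|ω|². -/
/-!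
Write `a i j = ∂ⱼuᵢ`. By the product rule,
`ΔH = ∑ (a i j)² + u · Δu + Δp` and `u · ∇H = u · ((u · ∇)u + ∇p)`, and the latter is `u · Δu` by the
momentum equation, so `ΔH - u · ∇H = ∑ (a i j)² + Δp`. Taking the divergence of the momentum
equation and commuting derivatives (`pd_comm`), every term containing `div u` drops out and the
pressure equation `Δp = -∑ (a i j) (a j i)` remains (`lap_pressure`). Finally
`2 ∑ ((a i j - a j i) / 2)² = ∑ (a i j)² - ∑ (a i j) (a j i)`.
-/

noncomputable section

/-- Partial derivative in the `j`-th coordinate direction. -/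
def pd (n : ℕ) (f : (Fin n → ℝ) → ℝ) (j : Fin n) (x : Fin n → ℝ) : ℝ :=
  fderiv ℝ f x (Pi.single j 1)

/-- Laplacian of a scalar function on `ℝⁿ`. -/
def lap (n : ℕ) (f : (Fin n → ℝ) → ℝ) (x : Fin n → ℝ) : ℝ :=
  ∑ j, pd n (pd n f j) j x

section PartialDerivatives

variable {n : ℕ} {Ω : Set (Fin n → ℝ)} {f g : (Fin n → ℝ) → ℝ} {x : Fin n → ℝ}

theorem diffAt_of_smooth (hΩ : IsOpen Ω) (hf : ContDiffOn ℝ (⊤ : ℕ∞) f Ω) (hx : x ∈ Ω) :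
    DifferentiableAt ℝ f x :=
  (hf.contDiffAt (hΩ.mem_nhds hx)).differentiableAt (by simp)

theorem pd_smooth (hΩ : IsOpen Ω) (hf : ContDiffOn ℝ (⊤ : ℕ∞) f Ω) (j : Fin n) :
    ContDiffOn ℝ (⊤ : ℕ∞) (pd n f j) Ω :=
  (hf.fderiv_of_isOpen hΩ (by simp)).clm_apply contDiffOn_const

theorem pd_congr (hΩ : IsOpen Ω) (h : ∀ y ∈ Ω, f y = g y) (j : Fin n) (hx : x ∈ Ω) :
    pd n f j x = pd n g j x := by
  have : f =ᶠ[nhds x] g := Filter.eventually_of_mem (hΩ.mem_nhds hx) h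
  simp only [pd, this.fderiv_eq]

theorem pd_add (hf : DifferentiableAt ℝ f x) (hg : DifferentiableAt ℝ g x) (j : Fin n) :
    pd n (fun y => f y + g y) j x = pd n f j x + pd n g j x := by
  simp [pd, fderiv_fun_add hf hg]

theorem pd_mul (hf : DifferentiableAt ℝ f x) (hg : DifferentiableAt ℝ g x) (j : Fin n) :
    pd n (fun y => f y * g y) j x = pd n f j x * g x + f x * pd n g j x := by
  simp [pd, fderiv_fun_mul hf hg]
  ring

theorem pd_sum {F : Fin n → (Fin n → ℝ) → ℝ} (hF : ∀ i, DifferentiableAt ℝ (F i) x) (j : Fin n) :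
    pd n (fun y => ∑ i, F i y) j x = ∑ i, pd n (F i) j x := by
  simp [pd, fderiv_fun_sum (fun i _ => hF i)]

theorem pd_comm (hΩ : IsOpen Ω) (hf : ContDiffOn ℝ (⊤ : ℕ∞) f Ω) (i j : Fin n) (hx : x ∈ Ω) :
    pd n (pd n f i) j x = pd n (pd n f j) i x := by
  have hc := hf.contDiffAt (hΩ.mem_nhds hx)
  have hd : DifferentiableAt ℝ (fderiv ℝ f) x :=
    ((hf.fderiv_of_isOpen (m := (⊤ : ℕ∞)) hΩ (by simp)).contDiffAt
      (hΩ.mem_nhds hx)).differentiableAt (by simp)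
  have key : ∀ a b : Fin n, pd n (pd n f a) b x
      = fderiv ℝ (fderiv ℝ f) x (Pi.single b 1) (Pi.single a 1) := by
    intro a b
    change fderiv ℝ (fun y => fderiv ℝ f y (Pi.single a 1)) x (Pi.single b 1) = _
    rw [fderiv_clm_apply hd (differentiableAt_const _)]
    simp
  rw [key, key]
  have h2 : (2 : WithTop ℕ∞) ≤ ((⊤ : ℕ∞) : WithTop ℕ∞) :=
    WithTop.coe_le_coe.2 (le_top : (2 : ℕ∞) ≤ ⊤)
  exact (hc.isSymmSndFDerivAt (by simpa using h2)) _ _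

/-- The gradient of the Bernoulli quantity: `∂ⱼH = ∑ uᵢ ∂ⱼuᵢ + ∂ⱼp`. -/
theorem pd_bernoulli {u : (Fin n → ℝ) → Fin n → ℝ} {p : (Fin n → ℝ) → ℝ}
    (hu : ∀ i, DifferentiableAt ℝ (fun y => u y i) x) (hp : DifferentiableAt ℝ p x) (j : Fin n) :
    pd n (fun y => (∑ i, u y i ^ 2) / 2 + p y) j x
      = (∑ i, u x i * pd n (fun y => u y i) j x) + pd n p j x := by
  have hsq : ∀ i, DifferentiableAt ℝ (fun y => (1 / 2 : ℝ) * (u y i * u y i)) x := fun i =>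
    ((hu i).mul (hu i)).const_mul _
  have e : (fun y => (∑ i, u y i ^ 2) / 2 + p y)
      = fun y => (∑ i, (1 / 2 : ℝ) * (u y i * u y i)) + p y := by
    funext y
    rw [← Finset.mul_sum]
    simp only [sq]
    ring
  rw [e, pd_add (DifferentiableAt.fun_sum fun i _ => hsq i) hp, pd_sum hsq]
  congr 1
  refine Finset.sum_congr rfl fun i _ => ?_
  rw [pd_mul (differentiableAt_const _) ((hu i).fun_mul (hu i)), pd_mul (hu i) (hu i)]
  simp [pd]
  ring

/-- The pressure equation `Δp = -∑ ∂ⱼuᵢ ∂ᵢuⱼ`, the divergence of the momentum equation. -/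
theorem lap_pressure (hΩ : IsOpen Ω) {u : (Fin n → ℝ) → Fin n → ℝ} {p : (Fin n → ℝ) → ℝ}
    (hu : ∀ i, ContDiffOn ℝ (⊤ : ℕ∞) (fun y => u y i) Ω) (hp : ContDiffOn ℝ (⊤ : ℕ∞) p Ω)
    (hdiv : ∀ x ∈ Ω, ∑ i, pd n (fun y => u y i) i x = 0)
    (hNS : ∀ x ∈ Ω, ∀ i : Fin n,
      lap n (fun y => u y i) x
        = (∑ j, u x j * pd n (fun y => u y i) j x) + pd n p i x) (hx : x ∈ Ω) :
    lap n p x = -∑ i, ∑ j, pd n (fun y => u y i) j x * pd n (fun y => u y j) i x := by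
  have dA := fun {f : (Fin n → ℝ) → ℝ} (hf : ContDiffOn ℝ (⊤ : ℕ∞) f Ω) {y} (hy : y ∈ Ω) =>
    diffAt_of_smooth hΩ hf hy
  have d1 := fun i j => pd_smooth hΩ (hu i) j
  have d2 := fun i j k => pd_smooth hΩ (d1 i j) k
  have zero : ∀ (y : Fin n → ℝ) (k : Fin n), pd n (fun _ => (0 : ℝ)) k y = 0 := by
    intro y k
    simp [pd]
  have divk : ∀ k, ∀ y ∈ Ω, ∑ i, pd n (pd n (fun y => u y i) i) k y = 0 := by
    intro k y hy
    rw [← pd_sum (fun i => dA (d1 i i) hy), pd_congr hΩ hdiv k hy, zero]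
  have divkk : ∀ k, ∑ i, pd n (pd n (pd n (fun y => u y i) i) k) k x = 0 := by
    intro k
    rw [← pd_sum (fun i => dA (d2 i i k) hx), pd_congr hΩ (divk k) k hx, zero]
  have hlap : ∑ i, pd n (lap n (fun y => u y i)) i x = 0 := by
    have h1 : ∀ i, pd n (lap n (fun y => u y i)) i x
        = ∑ k, pd n (pd n (pd n (fun y => u y i) i) k) k x := by
      intro i
      change pd n (fun y => ∑ k, pd n (pd n (fun y => u y i) k) k y) i x = _
      rw [pd_sum (fun k => dA (d2 i k k) hx)]
      refine Finset.sum_congr rfl fun k _ => ?_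
      rw [pd_comm hΩ (d1 i k) k i hx]
      exact pd_congr hΩ (fun y hy => pd_comm hΩ (hu i) k i hy) k hx
    simp only [h1]
    rw [Finset.sum_comm]
    simp only [divkk, Finset.sum_const_zero]
  have hmom : ∀ i, pd n (lap n (fun y => u y i)) i x
      = (∑ j, (pd n (fun y => u y j) i x * pd n (fun y => u y i) j x
          + u x j * pd n (pd n (fun y => u y i) i) j x)) + pd n (pd n p i) i x := by
    intro i
    have hm : ∀ j, DifferentiableAt ℝ (fun y => u y j * pd n (fun y => u y i) j y) x := fun j =>
      (dA (hu j) hx).mul (dA (d1 i j) hx)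
    rw [pd_congr hΩ (fun y hy => hNS y hy i) i hx,
      pd_add (DifferentiableAt.fun_sum fun j _ => hm j) (dA (pd_smooth hΩ hp i) hx), pd_sum hm]
    congr 1
    refine Finset.sum_congr rfl fun j _ => ?_
    rw [pd_mul (dA (hu j) hx) (dA (d1 i j) hx), pd_comm hΩ (hu i) j i hx]
  have htransport : ∑ i, ∑ j, u x j * pd n (pd n (fun y => u y i) i) j x = 0 := by
    rw [Finset.sum_comm]
    simp only [← Finset.mul_sum]
    exact Finset.sum_eq_zero fun j _ => by rw [divk j x hx, mul_zero]
  simp only [hmom, Finset.sum_add_distrib, htransport] at hlap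
  have hswap : ∑ i, ∑ j, pd n (fun y => u y j) i x * pd n (fun y => u y i) j x
      = ∑ i, ∑ j, pd n (fun y => u y i) j x * pd n (fun y => u y j) i x := Finset.sum_comm
  rw [hswap] at hlap
  unfold lap
  linarith

end PartialDerivatives

theorem bernoulli_identity
    (n : ℕ) (Ω : Set (Fin n → ℝ)) (hΩ : IsOpen Ω)
    (u : (Fin n → ℝ) → Fin n → ℝ) (p : (Fin n → ℝ) → ℝ)
    (hu : ContDiffOn ℝ (⊤ : ℕ∞) u Ω) (hp : ContDiffOn ℝ (⊤ : ℕ∞) p Ω)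
    (hdiv : ∀ x ∈ Ω, ∑ i, pd n (fun y => u y i) i x = 0)
    (hNS : ∀ x ∈ Ω, ∀ i : Fin n,
      lap n (fun y => u y i) x
        = (∑ j, u x j * pd n (fun y => u y i) j x) + pd n p i x) :
    ∀ x ∈ Ω,
      lap n (fun y => (∑ i, u y i ^ 2) / 2 + p y) x
          - ∑ j, u x j * pd n (fun y => (∑ i, u y i ^ 2) / 2 + p y) j x
        = 2 * ∑ i, ∑ j,
            ((pd n (fun y => u y i) j x - pd n (fun y => u y j) i x) / 2) ^ 2 := by
  intro x hx
  have hui : ∀ i, ContDiffOn ℝ (⊤ : ℕ∞) (fun y => u y i) Ω := fun i => contDiffOn_pi.1 hu i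
  have dA := fun {f : (Fin n → ℝ) → ℝ} (hf : ContDiffOn ℝ (⊤ : ℕ∞) f Ω) {y} (hy : y ∈ Ω) =>
    diffAt_of_smooth hΩ hf hy
  have d1 := fun i j => pd_smooth hΩ (hui i) j
  have hgrad : ∀ j, ∀ y ∈ Ω, pd n (fun y => (∑ i, u y i ^ 2) / 2 + p y) j y
      = (∑ i, u y i * pd n (fun y => u y i) j y) + pd n p j y := fun j y hy =>
    pd_bernoulli (fun i => dA (hui i) hy) (dA hp hy) j
  have hlapH : lap n (fun y => (∑ i, u y i ^ 2) / 2 + p y) x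
      = (∑ i, ∑ j, pd n (fun y => u y i) j x ^ 2)
        + (∑ i, u x i * lap n (fun y => u y i) x) + lap n p x := by
    have h2 : ∀ j, pd n (pd n (fun y => (∑ i, u y i ^ 2) / 2 + p y) j) j x
        = (∑ i, (pd n (fun y => u y i) j x ^ 2 + u x i * pd n (pd n (fun y => u y i) j) j x))
          + pd n (pd n p j) j x := by
      intro j
      have hm : ∀ i, DifferentiableAt ℝ (fun y => u y i * pd n (fun y => u y i) j y) x := fun i =>
        (dA (hui i) hx).mul (dA (d1 i j) hx)
      rw [pd_congr hΩ (hgrad j) j hx,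
        pd_add (DifferentiableAt.fun_sum fun i _ => hm i) (dA (pd_smooth hΩ hp j) hx), pd_sum hm]
      congr 1
      refine Finset.sum_congr rfl fun i _ => ?_
      rw [pd_mul (dA (hui i) hx) (dA (d1 i j) hx), sq]
    unfold lap
    simp only [h2, Finset.sum_add_distrib, Finset.mul_sum]
    congr 2
    · exact Finset.sum_comm
    · exact Finset.sum_comm
  have hadv : ∑ j, u x j * pd n (fun y => (∑ i, u y i ^ 2) / 2 + p y) j x
      = ∑ i, u x i * lap n (fun y => u y i) x := by
    simp only [hgrad _ x hx, hNS x hx, mul_add, Finset.sum_add_distrib, Finset.mul_sum]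
    congr 1
    rw [Finset.sum_comm]
    exact Finset.sum_congr rfl fun i _ => Finset.sum_congr rfl fun j _ => by ring
  have hω : 2 * ∑ i, ∑ j,
        ((pd n (fun y => u y i) j x - pd n (fun y => u y j) i x) / 2) ^ 2
      = (∑ i, ∑ j, pd n (fun y => u y i) j x ^ 2)
        - ∑ i, ∑ j, pd n (fun y => u y i) j x * pd n (fun y => u y j) i x := by
    have hswap : ∑ i, ∑ j, pd n (fun y => u y j) i x ^ 2
        = ∑ i, ∑ j, pd n (fun y => u y i) j x ^ 2 := Finset.sum_comm
    have hterm : ∀ i j, ((pd n (fun y => u y i) j x - pd n (fun y => u y j) i x) / 2) ^ 2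
        = (1 / 4) * pd n (fun y => u y i) j x ^ 2 + (1 / 4) * pd n (fun y => u y j) i x ^ 2
          - (1 / 2) * (pd n (fun y => u y i) j x * pd n (fun y => u y j) i x) := by
      intro i j
      ring
    simp only [hterm, Finset.sum_add_distrib, Finset.sum_sub_distrib, ← Finset.mul_sum, hswap]
    ring
  rw [hlapH, hadv, hω, lap_pressure hΩ hui hp hdiv hNS hx]
  ring
end
end

section
/- Define H(κ) = 2 F(κ) (E(κ) - ((2+κ)/3) F(κ)) for κ ≥ 0. Then for every κ > 0, H is differentiable at κ and 3κ(1+κ) H'(κ) = 3 E(κ)² - 2(2+κ) E(κ) F(κ) + (1+κ) F(κ)². -/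
/-!
Write `Δ = 1 + κ sin² φ` and `J = ∫₀^{π/2} Δ^{-3/2} dφ`. Differentiating under the integral sign
and substituting `κ sin² φ = Δ - 1` gives `2κ E' = E - F` and `2κ F' = J - F`. The identity
`κ (sin φ cos φ / √Δ)' = (1 + κ) Δ^{-3/2} - √Δ`, whose primitive vanishes at both ends of
`[0, π/2]`, gives `(1 + κ) J = E`. Hence `2κ(1 + κ) F' = E - (1 + κ) F`, and the formula for `H'`
follows from the product rule.
-/

noncomputable section

open Real

/-- The complete elliptic-type integral `F(κ) = ∫₀^{π/2} dφ/√(1 + κ sin²φ)`. -/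
def Fell (κ : ℝ) : ℝ := ∫ φ in (0:ℝ)..(π / 2), 1 / Real.sqrt (1 + κ * Real.sin φ ^ 2)

/-- The complete elliptic-type integral `E(κ) = ∫₀^{π/2} √(1 + κ sin²φ) dφ`. -/
def Eell (κ : ℝ) : ℝ := ∫ φ in (0:ℝ)..(π / 2), Real.sqrt (1 + κ * Real.sin φ ^ 2)

/-- `H(κ) = 2 F(κ) (E(κ) - ((2+κ)/3) F(κ))`. -/
def Hfun (κ : ℝ) : ℝ := 2 * Fell κ * (Eell κ - ((2 + κ) / 3) * Fell κ)

lemma one_le_radicand {x : ℝ} (hx : 0 < x) (φ : ℝ) : 1 ≤ 1 + x * Real.sin φ ^ 2 := by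
  have := mul_nonneg hx.le (sq_nonneg (Real.sin φ))
  linarith

lemma one_le_sqrt_radicand {x : ℝ} (hx : 0 < x) (φ : ℝ) :
    1 ≤ Real.sqrt (1 + x * Real.sin φ ^ 2) :=
  Real.one_le_sqrt.mpr (one_le_radicand hx φ)

lemma sqrt_radicand_ne {x : ℝ} (hx : 0 < x) (φ : ℝ) :
    Real.sqrt (1 + x * Real.sin φ ^ 2) ≠ 0 := by
  have := one_le_sqrt_radicand hx φ
  positivity

lemma continuous_sqrt_radicand (x : ℝ) :
    Continuous (fun φ : ℝ => Real.sqrt (1 + x * Real.sin φ ^ 2)) := by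
  fun_prop

lemma continuous_inv_sqrt_radicand {x : ℝ} (hx : 0 < x) :
    Continuous (fun φ : ℝ => 1 / Real.sqrt (1 + x * Real.sin φ ^ 2)) :=
  continuous_const.div (continuous_sqrt_radicand x) (sqrt_radicand_ne hx)

/-- The integral `∫₀^{π/2} Δ^{-3/2} dφ`, where `Δ = 1 + κ sin² φ`. -/
def Jell (κ : ℝ) : ℝ :=
  ∫ φ in (0:ℝ)..(π / 2), 1 / Real.sqrt (1 + κ * Real.sin φ ^ 2) ^ 3

lemma continuous_inv_sqrt_radicand_cube {x : ℝ} (hx : 0 < x) :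
    Continuous (fun φ : ℝ => 1 / Real.sqrt (1 + x * Real.sin φ ^ 2) ^ 3) :=
  continuous_const.div ((continuous_sqrt_radicand x).pow 3)
    (fun φ => pow_ne_zero 3 (sqrt_radicand_ne hx φ))

lemma hasDerivAt_sqrt_radicand {x : ℝ} (hx : 0 < x) (φ : ℝ) :
    HasDerivAt (fun y : ℝ => Real.sqrt (1 + y * Real.sin φ ^ 2))
      (Real.sin φ ^ 2 / (2 * Real.sqrt (1 + x * Real.sin φ ^ 2))) x := by
  have h : HasDerivAt (fun y : ℝ => 1 + y * Real.sin φ ^ 2) (Real.sin φ ^ 2) x := by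
    simpa using ((hasDerivAt_id x).mul_const (Real.sin φ ^ 2)).const_add 1
  exact h.sqrt (by linarith [one_le_radicand hx φ])

lemma hasDerivAt_inv_sqrt_radicand {x : ℝ} (hx : 0 < x) (φ : ℝ) :
    HasDerivAt (fun y : ℝ => 1 / Real.sqrt (1 + y * Real.sin φ ^ 2))
      (-Real.sin φ ^ 2 / (2 * Real.sqrt (1 + x * Real.sin φ ^ 2) ^ 3)) x := by
  have h := (hasDerivAt_sqrt_radicand hx φ).inv (sqrt_radicand_ne hx φ)
  have h0 := sqrt_radicand_ne hx φ
  simp only [one_div]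
  refine h.congr_deriv ?_
  field_simp

lemma Eell_hasDerivAt {κ : ℝ} (hκ : 0 < κ) :
    HasDerivAt Eell ((Eell κ - Fell κ) / (2 * κ)) κ := by
  have hd := (intervalIntegral.hasDerivAt_integral_of_dominated_loc_of_deriv_le
    (μ := MeasureTheory.volume) (a := 0) (b := π / 2) (bound := fun _ => (1 : ℝ))
    (F := fun y φ : ℝ => Real.sqrt (1 + y * Real.sin φ ^ 2))
    (F' := fun y φ : ℝ => Real.sin φ ^ 2 / (2 * Real.sqrt (1 + y * Real.sin φ ^ 2)))
    (Ioi_mem_nhds hκ)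
    (Filter.Eventually.of_forall fun y => (continuous_sqrt_radicand y).aestronglyMeasurable)
    ((continuous_sqrt_radicand κ).intervalIntegrable _ _)
    (by
      refine Continuous.aestronglyMeasurable ?_
      exact (by fun_prop : Continuous fun φ : ℝ => Real.sin φ ^ 2).div
        (continuous_const.mul (continuous_sqrt_radicand κ))
        (fun φ => mul_ne_zero two_ne_zero (sqrt_radicand_ne hκ φ)))
    (Filter.Eventually.of_forall fun φ _ y hy => by
      have h1 := one_le_sqrt_radicand hy φ
      rw [Real.norm_eq_abs, abs_of_nonneg (by positivity), div_le_one (by positivity)]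
      linarith [Real.sin_sq_le_one φ])
    intervalIntegrable_const
    (Filter.Eventually.of_forall fun φ _ y hy => hasDerivAt_sqrt_radicand hy φ)).2
  have hval : (∫ φ in (0:ℝ)..(π / 2),
      Real.sin φ ^ 2 / (2 * Real.sqrt (1 + κ * Real.sin φ ^ 2)))
      = (Eell κ - Fell κ) / (2 * κ) := by
    rw [Eell, Fell, ← intervalIntegral.integral_sub
      ((continuous_sqrt_radicand κ).intervalIntegrable _ _)
      ((continuous_inv_sqrt_radicand hκ).intervalIntegrable _ _),
      ← intervalIntegral.integral_div]
    refine intervalIntegral.integral_congr fun φ _ => ?_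
    have h0 := sqrt_radicand_ne hκ φ
    have hs := Real.sq_sqrt (zero_le_one.trans (one_le_radicand hκ φ))
    generalize Real.sqrt (1 + κ * Real.sin φ ^ 2) = r at *
    field_simp
    linear_combination -hs
  rw [hval] at hd
  exact hd

lemma Fell_hasDerivAt {κ : ℝ} (hκ : 0 < κ) :
    HasDerivAt Fell ((Jell κ - Fell κ) / (2 * κ)) κ := by
  have hd := (intervalIntegral.hasDerivAt_integral_of_dominated_loc_of_deriv_le
    (μ := MeasureTheory.volume) (a := 0) (b := π / 2) (bound := fun _ => (1 : ℝ))
    (F := fun y φ : ℝ => 1 / Real.sqrt (1 + y * Real.sin φ ^ 2))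
    (F' := fun y φ : ℝ => -Real.sin φ ^ 2 / (2 * Real.sqrt (1 + y * Real.sin φ ^ 2) ^ 3))
    (Ioi_mem_nhds hκ)
    (by
      filter_upwards [Ioi_mem_nhds hκ] with y hy
      exact (continuous_inv_sqrt_radicand hy).aestronglyMeasurable)
    ((continuous_inv_sqrt_radicand hκ).intervalIntegrable _ _)
    (by
      refine Continuous.aestronglyMeasurable ?_
      exact (by fun_prop : Continuous fun φ : ℝ => -Real.sin φ ^ 2).div
        (continuous_const.mul ((continuous_sqrt_radicand κ).pow 3))
        (fun φ => mul_ne_zero two_ne_zero (pow_ne_zero 3 (sqrt_radicand_ne hκ φ))))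
    (Filter.Eventually.of_forall fun φ _ y hy => by
      have h1 := one_le_pow₀ (one_le_sqrt_radicand hy φ) (n := 3)
      rw [neg_div, norm_neg, Real.norm_eq_abs, abs_of_nonneg (by positivity),
        div_le_one (by positivity)]
      linarith [Real.sin_sq_le_one φ])
    intervalIntegrable_const
    (Filter.Eventually.of_forall fun φ _ y hy => hasDerivAt_inv_sqrt_radicand hy φ)).2
  have hval : (∫ φ in (0:ℝ)..(π / 2),
      -Real.sin φ ^ 2 / (2 * Real.sqrt (1 + κ * Real.sin φ ^ 2) ^ 3))
      = (Jell κ - Fell κ) / (2 * κ) := by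
    rw [Jell, Fell, ← intervalIntegral.integral_sub
      ((continuous_inv_sqrt_radicand_cube hκ).intervalIntegrable _ _)
      ((continuous_inv_sqrt_radicand hκ).intervalIntegrable _ _),
      ← intervalIntegral.integral_div]
    refine intervalIntegral.integral_congr fun φ _ => ?_
    have h0 := sqrt_radicand_ne hκ φ
    have hs := Real.sq_sqrt (zero_le_one.trans (one_le_radicand hκ φ))
    generalize Real.sqrt (1 + κ * Real.sin φ ^ 2) = r at *
    field_simp
    linear_combination hs
  rw [hval] at hd
  exact hd

lemma hasDerivAt_primitive {κ : ℝ} (hκ : 0 < κ) (φ : ℝ) :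
    HasDerivAt
      (fun t : ℝ => κ * (Real.sin t * Real.cos t / Real.sqrt (1 + κ * Real.sin t ^ 2)))
      ((1 + κ) * (1 / Real.sqrt (1 + κ * Real.sin φ ^ 2) ^ 3)
        - Real.sqrt (1 + κ * Real.sin φ ^ 2)) φ := by
  have h1 : HasDerivAt (fun t : ℝ => 1 + κ * Real.sin t ^ 2)
      (κ * (2 * Real.sin φ * Real.cos φ)) φ := by
    simpa using (((Real.hasDerivAt_sin φ).pow 2).const_mul κ).const_add 1
  have h2 := h1.sqrt (by linarith [one_le_radicand hκ φ])
  have h0 := sqrt_radicand_ne hκ φ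
  have h3 := ((((Real.hasDerivAt_sin φ).mul (Real.hasDerivAt_cos φ)).div h2 h0).const_mul κ)
  refine h3.congr_deriv ?_
  have hs := Real.sq_sqrt (zero_le_one.trans (one_le_radicand hκ φ))
  have hc := Real.cos_sq' φ
  simp only [Pi.mul_apply]
  generalize Real.sqrt (1 + κ * Real.sin φ ^ 2) = r at *
  generalize Real.sin φ = s at *
  generalize Real.cos φ = c at *
  field_simp
  have h4 : r ^ 4 = (1 + κ * s ^ 2) ^ 2 := by rw [← hs]; ring
  rw [h4, hs, hc]
  ring

/-- `Jell` reduces to `Eell`, by integrating an exact derivative over `[0, π/2]`. -/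
lemma one_add_mul_Jell {κ : ℝ} (hκ : 0 < κ) : (1 + κ) * Jell κ = Eell κ := by
  have hJ := ((continuous_inv_sqrt_radicand_cube hκ).intervalIntegrable
    (μ := MeasureTheory.volume) 0 (π / 2)).const_mul (1 + κ)
  have hE := (continuous_sqrt_radicand κ).intervalIntegrable
    (μ := MeasureTheory.volume) 0 (π / 2)
  have h := intervalIntegral.integral_eq_sub_of_hasDerivAt
    (fun φ _ => hasDerivAt_primitive hκ φ) (hJ.sub hE)
  rw [intervalIntegral.integral_sub hJ hE, intervalIntegral.integral_const_mul] at h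
  simp only [Real.sin_zero, Real.cos_pi_div_two, mul_zero, zero_mul, zero_div, sub_zero] at h
  exact sub_eq_zero.mp h

theorem Hfun_deriv (κ : ℝ) (hκ : 0 < κ) :
    DifferentiableAt ℝ Hfun κ ∧
    3 * κ * (1 + κ) * deriv Hfun κ
      = 3 * Eell κ ^ 2 - 2 * (2 + κ) * Eell κ * Fell κ + (1 + κ) * Fell κ ^ 2 := by
  have hF := Fell_hasDerivAt hκ
  have hE := Eell_hasDerivAt hκ
  have hlin : HasDerivAt (fun x : ℝ => (2 + x) / 3) (1 / 3) κ :=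
    ((hasDerivAt_id κ).const_add 2).div_const 3
  have hH : HasDerivAt Hfun _ κ := (hF.const_mul 2).mul (hE.sub (hlin.mul hF))
  refine ⟨hH.differentiableAt, ?_⟩
  rw [hH.deriv]
  have hJ := one_add_mul_Jell hκ
  generalize Jell κ = J at *
  rw [← hJ]
  field_simp
  ring
end
end

section
/- For every κ > 0 one has the strict inequality 3 E(κ)² - 2(2+κ) E(κ) F(κ) + (1+κ) F(κ)² < 0; consequently the function H(κ) = 2 F(κ) (E(κ) - ((2+κ)/3) F(κ)) is strictly decreasing on [0, ∞). -/
/-!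
Write `Δ = √(1 + κ sin² φ)`, `A = ∫ sin² φ / Δ` and `B = ∫ sin² φ / Δ³`, all integrals being over
`[0, π/2]`. Then `E = F + κ A`, and differentiation under the integral sign gives `E' = A / 2` and
`F' = - B / 2`. Since `sin φ cos φ / Δ` vanishes at both end points, its derivative
`(1 - 2 sin² φ - κ sin⁴ φ) / Δ³` has integral `0`. Combined with `Δ² = 1 + κ sin² φ`, this one
identity gives

* `(1 + κ) (F - κ B) = E`, and
* `(2 + κ) F - 2 E = κ² ∫ sin² φ cos² φ / Δ³`.

For `κ > 0` it follows that `F < E < (1 + κ / 2) F`, the first inequality because `A > 0`.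

The quadratic `3 x² - 2 (2 + κ) x + (1 + κ)` is `-κ` at `1` and `-κ² / 4` at `1 + κ / 2`, hence by
convexity it is negative at `x = E / F`. Finally, the formulas for the derivatives yield
`3 κ (1 + κ) H' = 3 E² - 2 (2 + κ) E F + (1 + κ) F²`, so `H' < 0` on `(0, ∞)`.
-/

noncomputable section

open Real

/-- The integrand `√(1 + κ sin² φ)` of `Eell`. -/
def ellDelta (κ φ : ℝ) : ℝ := √(1 + κ * sin φ ^ 2)

/-- The integral `∫₀^{π/2} sin²φ / √(1 + κ sin²φ) dφ`, equal to `2 E'(κ)`. -/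
def ellA (κ : ℝ) : ℝ := ∫ φ in (0:ℝ)..(π / 2), sin φ ^ 2 / ellDelta κ φ

/-- The integral `∫₀^{π/2} sin²φ / (1 + κ sin²φ)^{3/2} dφ`, equal to `-2 F'(κ)`. -/
def ellB (κ : ℝ) : ℝ := ∫ φ in (0:ℝ)..(π / 2), sin φ ^ 2 / ellDelta κ φ ^ 3

/-- The range `κ > -1/2` is an open neighbourhood of `[0, ∞)` on which `Δ` is bounded away from `0`
uniformly in `κ` and `φ`; this covers differentiation at `κ = 0` as well. -/
lemma ellRadicand_ge {κ : ℝ} (hκ : -(1 / 2) < κ) (φ : ℝ) : 1 / 4 ≤ 1 + κ * sin φ ^ 2 := by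
  nlinarith [sq_nonneg (sin φ), sin_sq_le_one φ]

lemma ellDelta_ge {κ : ℝ} (hκ : -(1 / 2) < κ) (φ : ℝ) : 1 / 2 ≤ ellDelta κ φ := by
  apply Real.le_sqrt_of_sq_le
  linarith [ellRadicand_ge hκ φ]

lemma ellDelta_pos {κ : ℝ} (hκ : -(1 / 2) < κ) (φ : ℝ) : 0 < ellDelta κ φ := by
  linarith [ellDelta_ge hκ φ]

lemma ellDelta_sq {κ : ℝ} (hκ : -(1 / 2) < κ) (φ : ℝ) :
    ellDelta κ φ ^ 2 = 1 + κ * sin φ ^ 2 :=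
  Real.sq_sqrt (by linarith [ellRadicand_ge hκ φ])

lemma continuous_ellDelta (κ : ℝ) : Continuous (ellDelta κ) := by
  unfold ellDelta; fun_prop

/-- Every integrand in the argument has the form `g / Δⁿ` with `g` continuous. -/
lemma intervalIntegrable_div_ellDelta {κ : ℝ} (hκ : -(1 / 2) < κ) {g : ℝ → ℝ}
    (hg : Continuous g) (n : ℕ) :
    IntervalIntegrable (fun φ => g φ / ellDelta κ φ ^ n) MeasureTheory.volume 0 (π / 2) :=
  (hg.div ((continuous_ellDelta κ).pow n)
    fun φ => (pow_pos (ellDelta_pos hκ φ) n).ne').intervalIntegrable _ _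

lemma hasDerivAt_ellDelta_left {κ : ℝ} (hκ : -(1 / 2) < κ) (φ : ℝ) :
    HasDerivAt (fun x => ellDelta x φ) (sin φ ^ 2 / (2 * ellDelta κ φ)) κ := by
  have h : HasDerivAt (fun x : ℝ => 1 + x * sin φ ^ 2) (sin φ ^ 2) κ := by
    simpa using ((hasDerivAt_id κ).mul_const (sin φ ^ 2)).const_add 1
  exact h.sqrt (by linarith [ellRadicand_ge hκ φ])

lemma hasDerivAt_one_div_ellDelta_left {κ : ℝ} (hκ : -(1 / 2) < κ) (φ : ℝ) :
    HasDerivAt (fun x => 1 / ellDelta x φ) (-(sin φ ^ 2 / (2 * ellDelta κ φ ^ 3))) κ := by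
  have hp := ellDelta_pos hκ φ
  have h := (hasDerivAt_ellDelta_left hκ φ).fun_inv hp.ne'
  simp only [one_div]
  refine h.congr_deriv ?_
  field_simp

lemma hasDerivAt_Eell {κ : ℝ} (hκ : -(1 / 2) < κ) : HasDerivAt Eell (ellA κ / 2) κ := by
  have h := (intervalIntegral.hasDerivAt_integral_of_dominated_loc_of_deriv_le
    (F := ellDelta) (F' := fun x φ => sin φ ^ 2 / (2 * ellDelta x φ)) (a := 0) (b := π / 2)
    (μ := MeasureTheory.volume) (bound := fun _ => 1) (Ioi_mem_nhds hκ)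
    (.of_forall fun x => (continuous_ellDelta x).aestronglyMeasurable)
    ((continuous_ellDelta κ).intervalIntegrable _ _)
    (by
      have := (continuous_ellDelta κ).measurable
      exact Measurable.aestronglyMeasurable (by fun_prop))
    (.of_forall fun φ _ x hx => by
      have hd := ellDelta_ge hx φ
      rw [Real.norm_of_nonneg (by positivity), div_le_one (by positivity)]
      linarith [sin_sq_le_one φ])
    intervalIntegrable_const
    (.of_forall fun φ _ x hx => hasDerivAt_ellDelta_left hx φ)).2
  refine h.congr_deriv ?_
  rw [ellA, ← intervalIntegral.integral_div]
  congr 1; ext φ; rw [div_div, mul_comm]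

lemma hasDerivAt_Fell {κ : ℝ} (hκ : -(1 / 2) < κ) : HasDerivAt Fell (-(ellB κ / 2)) κ := by
  have h := (intervalIntegral.hasDerivAt_integral_of_dominated_loc_of_deriv_le
    (F := fun x φ => 1 / ellDelta x φ)
    (F' := fun x φ => -(sin φ ^ 2 / (2 * ellDelta x φ ^ 3))) (a := 0) (b := π / 2)
    (μ := MeasureTheory.volume) (bound := fun _ => 4) (Ioi_mem_nhds hκ)
    (.of_forall fun x => by
      have := (continuous_ellDelta x).measurable
      exact Measurable.aestronglyMeasurable (by fun_prop))
    (by simpa using intervalIntegrable_div_ellDelta hκ (g := fun _ => 1) continuous_const 1)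
    (by
      have := (continuous_ellDelta κ).measurable
      exact Measurable.aestronglyMeasurable (by fun_prop))
    (.of_forall fun φ _ x hx => by
      have hd := ellDelta_ge hx φ
      have h3 : (1 / 2 : ℝ) ^ 3 ≤ ellDelta x φ ^ 3 := by gcongr
      rw [norm_neg, Real.norm_of_nonneg (by positivity), div_le_iff₀ (by positivity)]
      linarith [sin_sq_le_one φ])
    intervalIntegrable_const
    (.of_forall fun φ _ x hx => hasDerivAt_one_div_ellDelta_left hx φ)).2
  refine h.congr_deriv ?_
  rw [ellB, intervalIntegral.integral_neg, ← intervalIntegral.integral_div]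
  congr 2; ext φ; rw [div_div, mul_comm]

/-- The integrand is the derivative of `sin φ cos φ / Δ`, which vanishes at `0` and `π / 2`. -/
lemma integral_ell_eq_zero {κ : ℝ} (hκ : -(1 / 2) < κ) :
    ∫ φ in (0:ℝ)..(π / 2), (1 - 2 * sin φ ^ 2 - κ * sin φ ^ 4) / ellDelta κ φ ^ 3 = 0 := by
  rw [intervalIntegral.integral_eq_sub_of_hasDerivAt
    (f := fun φ => sin φ * cos φ / ellDelta κ φ)]
  · simp
  · intro φ _
    have hp := ellDelta_pos hκ φ
    have hr : HasDerivAt (fun φ => 1 + κ * sin φ ^ 2) (κ * (2 * sin φ * cos φ)) φ := by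
      simpa using (((hasDerivAt_sin φ).fun_pow 2).const_mul κ).const_add 1
    have hD : HasDerivAt (ellDelta κ) (κ * (2 * sin φ * cos φ) / (2 * ellDelta κ φ)) φ :=
      hr.sqrt (by linarith [ellRadicand_ge hκ φ])
    refine (((hasDerivAt_sin φ).fun_mul (hasDerivAt_cos φ)).fun_div hD hp.ne').congr_deriv ?_
    field_simp
    rw [ellDelta_sq hκ, cos_sq']
    ring
  · exact intervalIntegrable_div_ellDelta hκ (by fun_prop) 3

lemma Eell_eq {κ : ℝ} (hκ : -(1 / 2) < κ) : Eell κ = Fell κ + κ * ellA κ := by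
  have h1 := intervalIntegrable_div_ellDelta hκ (g := fun _ => 1) continuous_const 1
  have h2 := intervalIntegrable_div_ellDelta hκ (g := fun φ => sin φ ^ 2) (by fun_prop) 1
  simp only [pow_one] at h1 h2
  change (∫ φ in (0:ℝ)..(π / 2), ellDelta κ φ) = (∫ φ in (0:ℝ)..(π / 2), 1 / ellDelta κ φ) + _
  rw [ellA, ← intervalIntegral.integral_const_mul, ← intervalIntegral.integral_add h1
    (h2.const_mul κ)]
  congr 1; ext φ
  have hp := ellDelta_pos hκ φ
  field_simp
  rw [ellDelta_sq hκ]

/-- Equivalent to `∫ 1 / Δ³ = E / (1 + κ)`. -/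
lemma Eell_eq_ellB {κ : ℝ} (hκ : -(1 / 2) < κ) :
    Eell κ = (1 + κ) * (Fell κ - κ * ellB κ) := by
  have h0 : IntervalIntegrable (ellDelta κ) MeasureTheory.volume 0 (π / 2) :=
    (continuous_ellDelta κ).intervalIntegrable _ _
  have h1 := intervalIntegrable_div_ellDelta hκ (g := fun _ => 1) continuous_const 1
  have h2 := intervalIntegrable_div_ellDelta hκ (g := fun φ => sin φ ^ 2) (by fun_prop) 3
  simp only [pow_one] at h1
  have key : Eell κ - (1 + κ) * (Fell κ - κ * ellB κ) = -κ *
      ∫ φ in (0:ℝ)..(π / 2), (1 - 2 * sin φ ^ 2 - κ * sin φ ^ 4) / ellDelta κ φ ^ 3 := by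
    change (∫ φ in (0:ℝ)..(π / 2), ellDelta κ φ) -
      (1 + κ) * ((∫ φ in (0:ℝ)..(π / 2), 1 / ellDelta κ φ) - _) = _
    rw [ellB, ← intervalIntegral.integral_const_mul κ, ← intervalIntegral.integral_sub h1
      (h2.const_mul κ), ← intervalIntegral.integral_const_mul (1 + κ),
      ← intervalIntegral.integral_sub h0 ((h1.sub (h2.const_mul κ)).const_mul (1 + κ)),
      ← intervalIntegral.integral_const_mul]
    congr 1; ext φ
    have hp := ellDelta_pos hκ φ
    have hs := ellDelta_sq hκ φ
    field_simp
    rw [show ellDelta κ φ ^ 4 = (ellDelta κ φ ^ 2) ^ 2 by ring, hs]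
    ring
  rw [integral_ell_eq_zero hκ] at key
  linarith

lemma Fell_pos {κ : ℝ} (hκ : -(1 / 2) < κ) : 0 < Fell κ := by
  have h1 := intervalIntegrable_div_ellDelta hκ (g := fun _ => 1) continuous_const 1
  simp only [pow_one] at h1
  exact intervalIntegral.intervalIntegral_pos_of_pos_on h1
    (fun φ _ => one_div_pos.2 (ellDelta_pos hκ φ)) (by positivity)

lemma ellA_pos {κ : ℝ} (hκ : -(1 / 2) < κ) : 0 < ellA κ := by
  have h2 := intervalIntegrable_div_ellDelta hκ (g := fun φ => sin φ ^ 2) (by fun_prop) 1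
  simp only [pow_one] at h2
  refine intervalIntegral.intervalIntegral_pos_of_pos_on h2 (fun φ hφ => ?_) (by positivity)
  have := sin_pos_of_pos_of_lt_pi hφ.1 (by linarith [hφ.2, pi_pos])
  exact div_pos (by positivity) (ellDelta_pos hκ φ)

lemma two_mul_Eell_lt {κ : ℝ} (hκ : 0 < κ) : 2 * Eell κ < (2 + κ) * Fell κ := by
  have hκ' : -(1 / 2) < κ := by linarith
  have h1 := intervalIntegrable_div_ellDelta hκ' (g := fun _ => 1) continuous_const 1
  have h2 := intervalIntegrable_div_ellDelta hκ' (g := fun φ => sin φ ^ 2) (by fun_prop) 1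
  have h3 := intervalIntegrable_div_ellDelta hκ'
    (g := fun φ => sin φ ^ 2 * cos φ ^ 2) (by fun_prop) 3
  have h4 := intervalIntegrable_div_ellDelta hκ'
    (g := fun φ => 1 - 2 * sin φ ^ 2 - κ * sin φ ^ 4) (by fun_prop) 3
  simp only [pow_one] at h1 h2
  have hpos : 0 < ∫ φ in (0:ℝ)..(π / 2), sin φ ^ 2 * cos φ ^ 2 / ellDelta κ φ ^ 3 := by
    refine intervalIntegral.intervalIntegral_pos_of_pos_on h3 (fun φ hφ => ?_) (by positivity)
    have := sin_pos_of_pos_of_lt_pi hφ.1 (by linarith [hφ.2, pi_pos])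
    have := cos_pos_of_mem_Ioo ⟨by linarith [hφ.1, pi_pos], hφ.2⟩
    have := ellDelta_pos hκ' φ
    positivity
  have key : Fell κ - 2 * ellA κ =
      (∫ φ in (0:ℝ)..(π / 2), (1 - 2 * sin φ ^ 2 - κ * sin φ ^ 4) / ellDelta κ φ ^ 3) +
      κ * ∫ φ in (0:ℝ)..(π / 2), sin φ ^ 2 * cos φ ^ 2 / ellDelta κ φ ^ 3 := by
    change (∫ φ in (0:ℝ)..(π / 2), 1 / ellDelta κ φ) - _ = _
    rw [ellA, ← intervalIntegral.integral_const_mul, ← intervalIntegral.integral_const_mul,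
      ← intervalIntegral.integral_sub h1 (h2.const_mul 2),
      ← intervalIntegral.integral_add h4 (h3.const_mul κ)]
    congr 1; ext φ
    have hp := ellDelta_pos hκ' φ
    field_simp
    rw [ellDelta_sq hκ', cos_sq']
    ring
  rw [integral_ell_eq_zero hκ', zero_add] at key
  rw [Eell_eq hκ']
  nlinarith [mul_pos hκ (mul_pos hκ hpos)]

lemma ell_quadratic_neg {κ : ℝ} (hκ : 0 < κ) :
    3 * Eell κ ^ 2 - 2 * (2 + κ) * Eell κ * Fell κ + (1 + κ) * Fell κ ^ 2 < 0 := by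
  have hκ' : -(1 / 2) < κ := by linarith
  have hF := Fell_pos hκ'
  have hE : 0 < Eell κ - Fell κ := by
    rw [Eell_eq hκ']; linarith [mul_pos hκ (ellA_pos hκ')]
  have hE2 := sub_pos.2 (two_mul_Eell_lt hκ)
  -- With `e = E - F` and `d = (2 + κ) F - 2 E`, the form equals `-(e² + d (2 e + F))`.
  nlinarith [mul_pos hE hE, mul_pos hE2 hE, mul_pos hE2 hF]

lemma hasDerivAt_Hfun {κ : ℝ} (hκ : -(1 / 2) < κ) :
    HasDerivAt Hfun (2 * -(ellB κ / 2) * (Eell κ - ((2 + κ) / 3) * Fell κ) +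
      2 * Fell κ * (ellA κ / 2 -
        (1 / 3 * Fell κ + (2 + κ) / 3 * -(ellB κ / 2)))) κ := by
  have hE := hasDerivAt_Eell hκ
  have hF := hasDerivAt_Fell hκ
  have hl : HasDerivAt (fun x : ℝ => (2 + x) / 3) (1 / 3) κ :=
    ((hasDerivAt_id κ).const_add 2).div_const 3
  exact (hF.const_mul 2).fun_mul (hE.fun_sub (hl.fun_mul hF))

theorem Hfun_strictAnti :
    (∀ κ : ℝ, 0 < κ →
      3 * Eell κ ^ 2 - 2 * (2 + κ) * Eell κ * Fell κ + (1 + κ) * Fell κ ^ 2 < 0) ∧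
    StrictAntiOn Hfun (Set.Ici 0) := by
  refine ⟨fun κ hκ => ell_quadratic_neg hκ, ?_⟩
  refine strictAntiOn_of_deriv_neg (convex_Ici 0) (fun κ hκ => ?_) (fun κ hκ => ?_)
  · have hκ0 : (0:ℝ) ≤ κ := hκ
    exact (hasDerivAt_Hfun (by linarith)).continuousAt.continuousWithinAt
  · rw [interior_Ici] at hκ
    have hκ0 : (0:ℝ) < κ := hκ
    have hκ' : -(1 / 2) < κ := by linarith
    rw [(hasDerivAt_Hfun hκ').deriv]
    have hA : ellA κ = (Eell κ - Fell κ) / κ := by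
      rw [Eell_eq hκ']; field_simp; ring
    have hB : ellB κ = (Fell κ - Eell κ / (1 + κ)) / κ := by
      rw [Eell_eq_ellB hκ']; field_simp; ring
    have hq := div_neg_of_neg_of_pos (ell_quadratic_neg hκ0)
      (show 0 < 3 * κ * (1 + κ) by positivity)
    refine lt_of_eq_of_lt ?_ hq
    rw [hA, hB]
    field_simp
    ring
end
end
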